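/- The dressed Cauchy matrix obeys the linear shift relations M̃ = M − r·s̃ᵀ, M̂ = M − r·ŝᵀ, and M̄ = M − r·s̄ᵀ, where s̃, ŝ, s̄ denote the vector s evaluated at (n+1,m,h), (n,m+1,h), (n,m,h+1) respectively. -/

import Mathlib

open scoped BigOperators

noncomputable section

/-- A period lattice in `ℂ` spanned by two `ℝ`-independent periods. -/
structure EllLattice where
  ω₁ : ℂ
  ω₂ : ℂ
  indep : ∀ a b : ℝ, a • ω₁ + b • ω₂ = 0 → a = 0 ∧ b = 0

namespace EllLattice

/-- Membership in the lattice `Λ = ℤω₁ + ℤω₂`. -/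
def mem (L : EllLattice) (z : ℂ) : Prop := ∃ m n : ℤ, z = m • L.ω₁ + n • L.ω₂

/-- The lattice point with integer coordinates `p = (m, n)`. -/
def per (L : EllLattice) (p : ℤ × ℤ) : ℂ := p.1 • L.ω₁ + p.2 • L.ω₂

/-- The Weierstrass sigma function associated to the lattice, defined by its
Hadamard product over the nonzero lattice points. -/
def sigma (L : EllLattice) (z : ℂ) : ℂ :=
  z * ∏' p : {p : ℤ × ℤ // p ≠ 0},
      ((1 - z / L.per p.1) *
        Complex.exp (z / L.per p.1 + z ^ 2 / (2 * (L.per p.1) ^ 2)))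

/-- The Weierstrass zeta function `ζ = σ′/σ`. -/
def zeta (L : EllLattice) (z : ℂ) : ℂ := deriv L.sigma z / L.sigma z

/-- The Weierstrass `℘`-function `℘ = −ζ′`. -/
def wp (L : EllLattice) (z : ℂ) : ℂ := - deriv L.zeta z

/-- `Φ_ξ(κ) = σ(ξ+κ)/(σ(ξ)σ(κ))`. -/
def Phi (L : EllLattice) (ξ κ : ℂ) : ℂ := L.sigma (ξ + κ) / (L.sigma ξ * L.sigma κ)

/-- The Lamé function `Ψ_ξ(κ) = Φ_ξ(κ)·e^{−ζ(ξ)κ}`. -/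
def Psi (L : EllLattice) (ξ κ : ℂ) : ℂ := L.Phi ξ κ * Complex.exp (-(L.zeta ξ) * κ)

/-- `η_δ(ξ) = ζ(ξ+δ) − ζ(ξ) − ζ(δ)`. -/
def eta (L : EllLattice) (δ ξ : ℂ) : ℂ := L.zeta (ξ + δ) - L.zeta ξ - L.zeta δ

/-- `χ_{α,β}(ξ) = ζ(α) + ζ(β) + ζ(ξ) − ζ(ξ+α+β)`. -/
def chi (L : EllLattice) (α β ξ : ℂ) : ℂ :=
  L.zeta α + L.zeta β + L.zeta ξ - L.zeta (ξ + α + β)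

end EllLattice

open Matrix

/-- All the data entering the elliptic (N,N′)-soliton solutions of the lattice KP system:
a period lattice, lattice parameters `δ, ε, λ`, a base point `ξ₀`, rapidity parameters
`κ_i, κ′_j`, initial plane-wave constants `ρ⁰_i, ν⁰_j` and a constant `N′×N` matrix `C`. -/
structure KPData (N N' : ℕ) where
  L : EllLattice
  del : ℂ
  eps : ℂ
  lam : ℂ
  xi0 : ℂ
  κ : Fin N → ℂ
  κ' : Fin N' → ℂ
  ρ0 : Fin N → ℂ
  ν0 : Fin N' → ℂ
  C : Matrix (Fin N') (Fin N) ℂ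

namespace KPData

variable {N N' : ℕ}

/-- `ξ = ξ₀ + nδ + mε + hλ`. -/
def xi (D : KPData N N') (n m h : ℤ) : ℂ :=
  D.xi0 + n • D.del + m • D.eps + h • D.lam

/-- The plane-wave factor `ρ_i(n,m,h)`. -/
def ρ (D : KPData N N') (i : Fin N) (n m h : ℤ) : ℂ :=
  (Complex.exp (-(D.L.zeta D.del) * D.κ i) * D.L.Psi D.del (-(D.κ i))) ^ n *
  (Complex.exp (-(D.L.zeta D.eps) * D.κ i) * D.L.Psi D.eps (-(D.κ i))) ^ m *
  (Complex.exp (-(D.L.zeta D.lam) * D.κ i) * D.L.Psi D.lam (-(D.κ i))) ^ h *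
  Complex.exp (D.L.zeta (D.xi n m h) * D.κ i) * D.ρ0 i

/-- The plane-wave factor `ν_j(n,m,h)`. -/
def ν (D : KPData N N') (j : Fin N') (n m h : ℤ) : ℂ :=
  (Complex.exp (D.L.zeta D.del * D.κ' j) * D.L.Psi D.del (D.κ' j)) ^ (-n) *
  (Complex.exp (D.L.zeta D.eps * D.κ' j) * D.L.Psi D.eps (D.κ' j)) ^ (-m) *
  (Complex.exp (D.L.zeta D.lam * D.κ' j) * D.L.Psi D.lam (D.κ' j)) ^ (-h) *
  Complex.exp (D.L.zeta (D.xi n m h) * D.κ' j) * D.ν0 j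

/-- The dressed elliptic Cauchy matrix `M_{ij} = ρ_i Ψ_ξ(κ_i + κ′_j) ν_j`. -/
def M (D : KPData N N') (n m h : ℤ) : Matrix (Fin N) (Fin N') ℂ :=
  Matrix.of fun i j => D.ρ i n m h * D.L.Psi (D.xi n m h) (D.κ i + D.κ' j) * D.ν j n m h

/-- The column vector `r = (ρ_i Ψ_ξ(κ_i))_i`. -/
def r (D : KPData N N') (n m h : ℤ) : Fin N → ℂ :=
  fun i => D.ρ i n m h * D.L.Psi (D.xi n m h) (D.κ i)

/-- The column vector `s = (ν_j Ψ_ξ(κ′_j))_j`. -/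
def s (D : KPData N N') (n m h : ℤ) : Fin N' → ℂ :=
  fun j => D.ν j n m h * D.L.Psi (D.xi n m h) (D.κ' j)

/-- The τ-function `τ = det(1 + MC)`. -/
def τ (D : KPData N N') (n m h : ℤ) : ℂ := (1 + D.M n m h * D.C).det

/-- The diagonal matrix `χ_{α,K}(ξ) = diag(χ_{α,κ_i}(ξ))`. -/
def DK (D : KPData N N') (α : ℂ) (n m h : ℤ) : Matrix (Fin N) (Fin N) ℂ :=
  Matrix.diagonal fun i => D.L.chi α (D.κ i) (D.xi n m h)

/-- The diagonal matrix `χ_{β,K′}(ξ) = diag(χ_{β,κ′_j}(ξ))`. -/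
def DK' (D : KPData N N') (β : ℂ) (n m h : ℤ) : Matrix (Fin N') (Fin N') ℂ :=
  Matrix.diagonal fun j => D.L.chi β (D.κ' j) (D.xi n m h)

/-- `W_β = 1 − sᵀ (χ_{β,K′}(ξ))⁻¹ C (1+MC)⁻¹ r`. -/
def W (D : KPData N N') (β : ℂ) (n m h : ℤ) : ℂ :=
  1 - D.s n m h ⬝ᵥ ((D.DK' β n m h)⁻¹ *ᵥ (D.C *ᵥ ((1 + D.M n m h * D.C)⁻¹ *ᵥ D.r n m h)))

/-- `V_α = 1 − sᵀ (1+CM)⁻¹ C (χ_{α,K}(ξ))⁻¹ r`. -/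
def V (D : KPData N N') (α : ℂ) (n m h : ℤ) : ℂ :=
  1 - D.s n m h ⬝ᵥ ((1 + D.C * D.M n m h)⁻¹ *ᵥ (D.C *ᵥ ((D.DK α n m h)⁻¹ *ᵥ D.r n m h)))

/-- `w₀ = sᵀ C (1+MC)⁻¹ r`. -/
def w0 (D : KPData N N') (n m h : ℤ) : ℂ :=
  D.s n m h ⬝ᵥ (D.C *ᵥ ((1 + D.M n m h * D.C)⁻¹ *ᵥ D.r n m h))

/-- `w = ζ(ξ) − w₀ − nζ(δ) − mζ(ε) − hζ(λ)`. -/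
def w (D : KPData N N') (n m h : ℤ) : ℂ :=
  D.L.zeta (D.xi n m h) - D.w0 n m h - n • D.L.zeta D.del - m • D.L.zeta D.eps -
    h • D.L.zeta D.lam

/-- `S_{β,α} = sᵀ (χ_{β,K′}(ξ))⁻¹ C (1+MC)⁻¹ (χ_{α,K}(ξ))⁻¹ r`. -/
def S (D : KPData N N') (β α : ℂ) (n m h : ℤ) : ℂ :=
  D.s n m h ⬝ᵥ ((D.DK' β n m h)⁻¹ *ᵥ
    (D.C *ᵥ ((1 + D.M n m h * D.C)⁻¹ *ᵥ ((D.DK α n m h)⁻¹ *ᵥ D.r n m h))))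

/-- `u_α = (1+MC)⁻¹ (χ_{α,K}(ξ))⁻¹ r`. -/
def u (D : KPData N N') (α : ℂ) (n m h : ℤ) : Fin N → ℂ :=
  (1 + D.M n m h * D.C)⁻¹ *ᵥ ((D.DK α n m h)⁻¹ *ᵥ D.r n m h)

/-- `u₀ = (1+MC)⁻¹ r`. -/
def u0 (D : KPData N N') (n m h : ℤ) : Fin N → ℂ :=
  (1 + D.M n m h * D.C)⁻¹ *ᵥ D.r n m h

/-- the adjoint (row) vector `ᵗu_β = sᵀ (χ_{β,K′}(ξ))⁻¹ (1+CM)⁻¹`. -/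
def tu (D : KPData N N') (β : ℂ) (n m h : ℤ) : Fin N' → ℂ :=
  (D.s n m h ᵥ* (D.DK' β n m h)⁻¹) ᵥ* (1 + D.C * D.M n m h)⁻¹

/-- the adjoint (row) vector `ᵗu₀ = sᵀ (1+CM)⁻¹`. -/
def tu0 (D : KPData N N') (n m h : ℤ) : Fin N' → ℂ :=
  D.s n m h ᵥ* (1 + D.C * D.M n m h)⁻¹

/-- The gauge variable `𝒱_α = Φ_ξ(α)·V_α`. -/
def calV (D : KPData N N') (α : ℂ) (n m h : ℤ) : ℂ :=
  D.L.Phi (D.xi n m h) α * D.V α n m h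

/-- The gauge variable `𝒲_β = Φ_ξ(β)·W_β`. -/
def calW (D : KPData N N') (β : ℂ) (n m h : ℤ) : ℂ :=
  D.L.Phi (D.xi n m h) β * D.W β n m h

/-- The Schwarzian variable `Z_{β,α} = Φ_ξ(α+β)·(1 − χ_{α,β}(ξ)·S_{β,α})`. -/
def Z (D : KPData N N') (β α : ℂ) (n m h : ℤ) : ℂ :=
  D.L.Phi (D.xi n m h) (α + β) * (1 - D.L.chi α β (D.xi n m h) * D.S β α n m h)

/-- Genericity of the parameters (together with finitely many auxiliary points `extra`):
no nontrivial integer combination of `ξ₀, δ, ε, λ`, the rapidity parameters and the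
auxiliary points lies on the lattice.  In particular all arguments of `σ` occurring in
the soliton solutions and their shifts lie outside `Λ`. -/
def Generic {P : ℕ} (D : KPData N N') (extra : Fin P → ℂ) : Prop :=
  ∀ (c0 cn cm ch : ℤ) (a : Fin N → ℤ) (b : Fin N' → ℤ) (e : Fin P → ℤ),
    ¬ (c0 = 0 ∧ cn = 0 ∧ cm = 0 ∧ ch = 0 ∧ a = 0 ∧ b = 0 ∧ e = 0) →
    ¬ D.L.mem (c0 • D.xi0 + cn • D.del + cm • D.eps + ch • D.lam +
      (∑ i, a i • D.κ i) + (∑ j, b j • D.κ' j) + ∑ t, e t • extra t)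

end KPData

/-! Each of the three relations holds entrywise. The exponential factors of `Ψ` and of the plane
waves cancel, so the entries of `M`, `r` and `s` are products of values of `Φ`, and the shift of `ξ`
by `y ∈ {δ, ε, λ}` is exactly the addition formula
`Φ_x(κ + κ') Φ_y(κ') = Φ_x(κ) Φ_{x+y}(κ') + Φ_{x+y}(κ + κ') Φ_y(-κ)`.

Cleared of denominators, this is Weierstrass' three-term identity for `F x a = σ(x + a) σ(x - a)`,
`F x a * F b c + F x b * F c a + F x c * F a b = 0`.
Since `(log σ)'' = -℘` away from the lattice and `℘` is periodic, a translation by a period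
multiplies `σ` by the exponential of an affine function. The factor by which `F x a` changes when
`x` moves by a period then does not depend on `a`, so that `F x b * F c a + F x c * F a b`, which
vanishes at `x = ± a`, is by Liouville's theorem a constant multiple of `F x a`. The value at
`x = b` identifies the constant. -/

open Filter Topology Complex

section CanonicalProduct

/-- The Weierstrass primary factor of genus two, `E₂(u) = (1 - u) exp (u + u² / 2)`. -/
def weierstrassFactor (u : ℂ) : ℂ := (1 - u) * exp (u + u ^ 2 / 2)

lemma hasDerivAt_weierstrassFactor (u : ℂ) :
    HasDerivAt weierstrassFactor (-u ^ 2 * exp (u + u ^ 2 / 2)) u := by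
  have hexponent : HasDerivAt (fun u : ℂ => u + u ^ 2 / 2) (1 + u) u := by
    simpa using (hasDerivAt_id' u).fun_add ((hasDerivAt_pow 2 u).div_const 2)
  exact (((hasDerivAt_id' u).const_sub 1).fun_mul hexponent.cexp).congr_deriv (by ring)

lemma differentiable_weierstrassFactor : Differentiable ℂ weierstrassFactor :=
  fun u => (hasDerivAt_weierstrassFactor u).differentiableAt

@[simp] lemma weierstrassFactor_zero : weierstrassFactor 0 = 1 := by simp [weierstrassFactor]

lemma weierstrassFactor_eq_zero_iff {u : ℂ} : weierstrassFactor u = 0 ↔ u = 1 := by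
  simp [weierstrassFactor, sub_eq_zero, eq_comm (a := u)]

lemma norm_weierstrassFactor_sub_one_le (u : ℂ) :
    ‖weierstrassFactor u - 1‖ ≤ ‖u‖ ^ 3 * Real.exp (‖u‖ + ‖u‖ ^ 2 / 2) := by
  have hderiv : ∀ v ∈ Metric.closedBall (0 : ℂ) ‖u‖,
      ‖-v ^ 2 * exp (v + v ^ 2 / 2)‖ ≤ ‖u‖ ^ 2 * Real.exp (‖u‖ + ‖u‖ ^ 2 / 2) := by
    intro v hv
    have hvu : ‖v‖ ≤ ‖u‖ := mem_closedBall_zero_iff.mp hv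
    have hexponent : ‖v + v ^ 2 / 2‖ ≤ ‖u‖ + ‖u‖ ^ 2 / 2 :=
      (norm_add_le _ _).trans (by simp only [norm_div, norm_pow, norm_ofNat]; gcongr)
    rw [norm_mul, norm_neg, norm_pow]
    gcongr
    exact (norm_exp_le_exp_norm _).trans (Real.exp_le_exp.mpr hexponent)
  have hmean := (convex_closedBall (0 : ℂ) ‖u‖).norm_image_sub_le_of_norm_hasDerivWithin_le
    (fun v _ => (hasDerivAt_weierstrassFactor v).hasDerivWithinAt) hderiv
    (Metric.mem_closedBall_self (norm_nonneg u)) (mem_closedBall_zero_iff.mpr le_rfl)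
  rw [weierstrassFactor_zero, sub_zero] at hmean
  linarith

/-- The canonical product of genus two with simple zeros at the points `1 / a i`, for
`∑ ‖a i‖³ < ∞`; indexing by the inverses of the zeros avoids a division. -/
def canonicalProduct {ι : Type*} (a : ι → ℂ) (z : ℂ) : ℂ := ∏' i, weierstrassFactor (a i * z)

variable {ι : Type*} {a : ι → ℂ}

@[simp] lemma canonicalProduct_zero : canonicalProduct a 0 = 1 := by simp [canonicalProduct]

lemma norm_weierstrassFactor_mul_sub_one_le_eventually (ha : Summable fun i => ‖a i‖ ^ 3)
    (r : ℝ) : ∀ᶠ i in cofinite, ∀ z : ℂ, ‖z‖ ≤ r →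
      ‖weierstrassFactor (a i * z) - 1‖ ≤ r ^ 3 * Real.exp (3 / 2) * ‖a i‖ ^ 3 := by
  have hsmall : Tendsto (fun i => (r * ‖a i‖) ^ 3) cofinite (𝓝 0) := by
    simpa [mul_pow] using ha.tendsto_cofinite_zero.const_mul (r ^ 3)
  filter_upwards [hsmall.eventually_le_const one_pos] with i hi z hz
  have hr : 0 ≤ r := (norm_nonneg z).trans hz
  have hu : ‖a i * z‖ ≤ r * ‖a i‖ := by rw [norm_mul, mul_comm]; gcongr
  have hu1 : ‖a i * z‖ ≤ 1 :=
    hu.trans ((pow_le_one_iff_of_nonneg (by positivity) three_ne_zero).mp hi)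
  calc ‖weierstrassFactor (a i * z) - 1‖
      ≤ ‖a i * z‖ ^ 3 * Real.exp (‖a i * z‖ + ‖a i * z‖ ^ 2 / 2) :=
        norm_weierstrassFactor_sub_one_le _
    _ ≤ (r * ‖a i‖) ^ 3 * Real.exp (3 / 2) := by
        gcongr
        nlinarith [norm_nonneg (a i * z)]
    _ = r ^ 3 * Real.exp (3 / 2) * ‖a i‖ ^ 3 := by ring

lemma summable_norm_weierstrassFactor_sub_one (ha : Summable fun i => ‖a i‖ ^ 3) (z : ℂ) :
    Summable fun i => ‖weierstrassFactor (a i * z) - 1‖ :=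
  .of_norm_bounded_eventually (ha.mul_left (‖z‖ ^ 3 * Real.exp (3 / 2))) <| by
    filter_upwards [norm_weierstrassFactor_mul_sub_one_le_eventually ha ‖z‖] with i hi
    simpa using hi z le_rfl

lemma hasProdLocallyUniformlyOn_canonicalProduct (ha : Summable fun i => ‖a i‖ ^ 3) :
    HasProdLocallyUniformlyOn (fun i z => weierstrassFactor (a i * z)) (canonicalProduct a)
      Set.univ := by
  refine hasProdLocallyUniformlyOn_of_forall_compact isOpen_univ fun K _ hK => ?_
  obtain ⟨r, hr⟩ := hK.isBounded.exists_norm_le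
  have hprod := (ha.mul_left (r ^ 3 * Real.exp (3 / 2))).hasProdUniformlyOn_one_add hK
    (f := fun i z => weierstrassFactor (a i * z) - 1)
    ((norm_weierstrassFactor_mul_sub_one_le_eventually ha r).mono fun i hi z hz =>
      hi z (hr z hz))
    fun i => by
      have := differentiable_weierstrassFactor.continuous
      fun_prop
  simp only [add_sub_cancel] at hprod
  exact hprod

lemma differentiable_canonicalProduct (ha : Summable fun i => ‖a i‖ ^ 3) :
    Differentiable ℂ (canonicalProduct a) :=
  differentiableOn_univ.mp <|
    (hasProdLocallyUniformlyOn_canonicalProduct ha).differentiableOn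
      (.of_forall fun s => by
        have := differentiable_weierstrassFactor
        fun_prop) isOpen_univ

lemma canonicalProduct_eq_zero_iff (ha : Summable fun i => ‖a i‖ ^ 3) {z : ℂ} :
    canonicalProduct a z = 0 ↔ ∃ i, a i * z = 1 := by
  refine ⟨fun h => ?_, fun ⟨i, hi⟩ =>
    tprod_of_exists_eq_zero ⟨i, weierstrassFactor_eq_zero_iff.mpr hi⟩⟩
  by_contra! hz
  refine tprod_one_add_ne_zero_of_summable (f := fun i => weierstrassFactor (a i * z) - 1)
    (fun i => ?_) (summable_norm_weierstrassFactor_sub_one ha z) ?_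
  · simpa [weierstrassFactor_eq_zero_iff] using hz i
  · simpa [canonicalProduct] using h

end CanonicalProduct

section LogDeriv

variable {f : ℂ → ℂ} {z : ℂ}

lemma deriv_logDeriv (hf : DifferentiableAt ℂ f z) (hf' : DifferentiableAt ℂ (deriv f) z)
    (hz : f z ≠ 0) :
    deriv (logDeriv f) z = (deriv (deriv f) z * f z - deriv f z ^ 2) / f z ^ 2 := by
  rw [logDeriv, deriv_div hf' hf hz, sq (deriv f z)]

lemma hasSum_deriv_logDeriv_of_hasProdLocallyUniformlyOn {ι : Type*} {F : ι → ℂ → ℂ} {U : Set ℂ}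
    (hU : IsOpen U) (hprod : HasProdLocallyUniformlyOn F f U)
    (hF : ∀ i, DifferentiableOn ℂ (F i) U) (hzU : z ∈ U) (hFz : ∀ i, F i z ≠ 0) (hfz : f z ≠ 0) :
    HasSum (fun i => deriv (logDeriv (F i)) z) (deriv (logDeriv f) z) := by
  have hUz : U ∈ 𝓝 z := hU.mem_nhds hzU
  have hpartial (s : Finset ι) : DifferentiableOn ℂ (∏ i ∈ s, F i ·) U := by fun_prop
  have hf : DifferentiableOn ℂ f U := hprod.differentiableOn (.of_forall hpartial) hU
  have hderiv := hprod.deriv (.of_forall hpartial) hU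
  have hderiv2 := hderiv.deriv (.of_forall fun s => (hpartial s).deriv hU) hU
  have hlim : Tendsto (fun s : Finset ι => deriv (logDeriv (∏ i ∈ s, F i ·)) z) atTop
      (𝓝 (deriv (logDeriv f) z)) := by
    rw [deriv_logDeriv (hf.differentiableAt hUz) ((hf.deriv hU).differentiableAt hUz) hfz]
    refine ((((hderiv2.tendsto_at hzU).mul (hprod.tendsto_at hzU)).sub
      ((hderiv.tendsto_at hzU).pow 2)).div ((hprod.tendsto_at hzU).pow 2)
        (pow_ne_zero 2 hfz)).congr fun s => ?_
    exact (deriv_logDeriv ((hpartial s).differentiableAt hUz)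
      (((hpartial s).deriv hU).differentiableAt hUz)
      (Finset.prod_ne_zero_iff.mpr fun i _ => hFz i)).symm
  refine hlim.congr fun s => ?_
  have hFs : ∀ᶠ w in 𝓝 z, ∀ i ∈ s, F i w ≠ 0 :=
    s.eventually_all.mpr fun i _ => ((hF i).differentiableAt hUz).continuousAt.eventually_ne (hFz i)
  have hsum : logDeriv (∏ i ∈ s, F i ·) =ᶠ[𝓝 z] fun w => ∑ i ∈ s, logDeriv (F i) w := by
    filter_upwards [hFs, hUz] with w hw hwU
    exact logDeriv_prod hw fun i _ => (hF i).differentiableAt (hU.mem_nhds hwU)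
  rw [hsum.deriv_eq, deriv_fun_sum fun i _ => ?_]
  exact (((hF i).deriv hU).differentiableAt hUz).div ((hF i).differentiableAt hUz) (hFz i)

lemma logDeriv_weierstrassFactor (u : ℂ) :
    logDeriv weierstrassFactor u = -u ^ 2 / (1 - u) := by
  rw [logDeriv_apply, (hasDerivAt_weierstrassFactor u).deriv, weierstrassFactor,
    mul_div_mul_right _ _ (exp_ne_zero _)]

lemma deriv_logDeriv_weierstrassFactor_mul {a : ℂ} (hz : a * z ≠ 1) :
    deriv (logDeriv fun w => weierstrassFactor (a * w)) z = a ^ 2 - a ^ 2 / (1 - a * z) ^ 2 := by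
  have hne : 1 - a * z ≠ 0 := sub_ne_zero.mpr hz.symm
  have hlog : (logDeriv fun w => weierstrassFactor (a * w)) =
      fun w => -(a * w) ^ 2 / (1 - a * w) * a := by
    funext w
    rw [← logDeriv_weierstrassFactor]
    exact (logDeriv_comp (differentiable_weierstrassFactor (a * w))
      (differentiableAt_id.const_mul a)).trans (by simp)
  have hmul : HasDerivAt (fun w => a * w) a z := by simpa using (hasDerivAt_id' z).const_mul a
  rw [hlog, (((hmul.fun_pow 2).fun_neg.fun_div (hmul.const_sub 1) hne).mul_const a).deriv]
  field_simp
  ring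

lemma hasSum_deriv_logDeriv_canonicalProduct {ι : Type*} {a : ι → ℂ}
    (ha : Summable fun i => ‖a i‖ ^ 3) (hz : ∀ i, a i * z ≠ 1) :
    HasSum (fun i => a i ^ 2 - a i ^ 2 / (1 - a i * z) ^ 2)
      (deriv (logDeriv (canonicalProduct a)) z) := by
  simpa only [deriv_logDeriv_weierstrassFactor_mul (hz _)] using
    hasSum_deriv_logDeriv_of_hasProdLocallyUniformlyOn isOpen_univ
      (hasProdLocallyUniformlyOn_canonicalProduct ha)
      (fun i => (differentiable_weierstrassFactor.comp (by fun_prop)).differentiableOn)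
      (Set.mem_univ z) (fun i => by simpa [weierstrassFactor_eq_zero_iff] using hz i)
      (by simpa [canonicalProduct_eq_zero_iff ha] using hz)

lemma exists_eqOn_mul_exp_mul_of_deriv_logDeriv_eqOn {f g : ℂ → ℂ} {U : Set ℂ} (hU : IsOpen U)
    (hUc : IsPreconnected U) (hf : DifferentiableOn ℂ f U) (hg : DifferentiableOn ℂ g U)
    (hf0 : ∀ z ∈ U, f z ≠ 0) (hg0 : ∀ z ∈ U, g z ≠ 0)
    (hfg : U.EqOn (deriv (logDeriv f)) (deriv (logDeriv g))) :
    ∃ a c : ℂ, a ≠ 0 ∧ U.EqOn f fun z => a * exp (c * z) * g z := by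
  have hlog {F : ℂ → ℂ} (hF : DifferentiableOn ℂ F U) (hF0 : ∀ z ∈ U, F z ≠ 0) :
      DifferentiableOn ℂ (logDeriv F) U := (hF.deriv hU).div hF hF0
  obtain ⟨c, hc⟩ := hU.exists_is_const_of_deriv_eq_zero hUc ((hlog hf hf0).sub (hlog hg hg0))
    fun z hz => by
      have hUz := hU.mem_nhds hz
      rw [deriv_sub ((hlog hf hf0).differentiableAt hUz) ((hlog hg hg0).differentiableAt hUz),
        hfg hz, sub_self, Pi.zero_apply]
  have hexp (z : ℂ) : HasDerivAt (fun w => exp (c * w)) (exp (c * z) * c) z := by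
    simpa using ((hasDerivAt_id' z).const_mul c).cexp
  have hlogDeriv : U.EqOn (logDeriv f) (logDeriv fun z => exp (c * z) * g z) := fun z hz => by
    rw [logDeriv_mul (f := fun w => exp (c * w)) z (exp_ne_zero _) (hg0 z hz)
      (hexp z).differentiableAt (hg.differentiableAt (hU.mem_nhds hz)),
      logDeriv_apply (fun w => exp (c * w)), (hexp z).deriv,
      mul_div_cancel_left₀ c (exp_ne_zero _)]
    exact sub_eq_iff_eq_add.mp (hc z hz)
  obtain ⟨a, ha, hfa⟩ := (logDeriv_eqOn_iff hf (by fun_prop) hU hUc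
    (fun z hz => mul_ne_zero (exp_ne_zero _) (hg0 z hz)) hf0).mp hlogDeriv
  exact ⟨a, c, ha, fun z hz => by simpa [mul_assoc] using hfa hz⟩

end LogDeriv

open PeriodPair

section PeriodLattice

variable (P : PeriodPair)

lemma countable_lattice : (P.lattice : Set ℂ).Countable :=
  Set.countable_coe_iff.mp (P.latticeEquivProd.toEquiv.countable_iff.mpr inferInstance)

lemma isPreconnected_compl_lattice : IsPreconnected (P.lattice : Set ℂ)ᶜ :=
  ((countable_lattice P).isConnected_compl_of_one_lt_rank (by simp)).isPreconnected

end PeriodLattice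

namespace EllLattice

variable (L : EllLattice)

/-- The generators of `L`, packaged so that Mathlib's theory of the Weierstrass function `℘`
applies. -/
def toPeriodPair : PeriodPair where
  ω₁ := L.ω₁
  ω₂ := L.ω₂
  indep := LinearIndependent.pair_iff.mpr L.indep

/-- The lattice `Λ` as a `ℤ`-submodule of `ℂ`. -/
abbrev lattice : Submodule ℤ ℂ := L.toPeriodPair.lattice

lemma mem_iff_mem_lattice {z : ℂ} : L.mem z ↔ z ∈ L.lattice := by
  simp only [mem, mem_lattice, toPeriodPair, zsmul_eq_mul, eq_comm]

lemma coe_latticeEquivProd_symm (p : ℤ × ℤ) :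
    (L.toPeriodPair.latticeEquivProd.symm p : ℂ) = L.per p := by
  rw [latticeEquiv_symm_apply]
  simp [per, toPeriodPair]

lemma per_mem_lattice (p : ℤ × ℤ) : L.per p ∈ L.lattice :=
  L.coe_latticeEquivProd_symm p ▸ (L.toPeriodPair.latticeEquivProd.symm p).2

lemma exists_per_eq {z : ℂ} (hz : z ∈ L.lattice) : ∃ p, L.per p = z :=
  ⟨L.toPeriodPair.latticeEquivProd ⟨z, hz⟩, by simp [← coe_latticeEquivProd_symm]⟩

lemma per_eq_zero_iff {p : ℤ × ℤ} : L.per p = 0 ↔ p = 0 := by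
  rw [← coe_latticeEquivProd_symm, ZeroMemClass.coe_eq_zero, LinearEquiv.map_eq_zero_iff]

lemma summable_norm_inv_per_pow_three :
    Summable fun p : {p : ℤ × ℤ // p ≠ 0} => ‖(L.per p)⁻¹‖ ^ 3 := by
  have hsum : Summable fun l : L.lattice => ‖(l : ℂ)‖ ^ (-3 : ℝ) :=
    ZLattice.summable_norm_rpow L.lattice (-3) (by simp; norm_num)
  refine (((L.toPeriodPair.latticeEquivProd.symm.toEquiv.summable_iff).mpr hsum).subtype
    {p | p ≠ 0}).congr fun p => ?_
  simp [coe_latticeEquivProd_symm]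

/-- The entire function `σ(z) / z`, with its value `1` at `z = 0`. -/
def reducedSigma : ℂ → ℂ := canonicalProduct fun p : {p : ℤ × ℤ // p ≠ 0} => (L.per p)⁻¹

lemma sigma_eq_mul_reducedSigma (z : ℂ) : L.sigma z = z * L.reducedSigma z := by
  simp only [sigma, reducedSigma, canonicalProduct, weierstrassFactor]
  congr! 5 <;> ring

lemma differentiable_reducedSigma : Differentiable ℂ L.reducedSigma :=
  differentiable_canonicalProduct L.summable_norm_inv_per_pow_three

lemma differentiable_sigma : Differentiable ℂ L.sigma := by
  have := L.differentiable_reducedSigma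
  simp only [funext L.sigma_eq_mul_reducedSigma]
  fun_prop

lemma sigma_eq_zero_iff {z : ℂ} : L.sigma z = 0 ↔ z ∈ L.lattice := by
  rw [sigma_eq_mul_reducedSigma, mul_eq_zero, reducedSigma,
    canonicalProduct_eq_zero_iff L.summable_norm_inv_per_pow_three]
  constructor
  · rintro (rfl | ⟨p, hp⟩)
    · exact zero_mem _
    · rw [← div_eq_inv_mul, div_eq_one_iff_eq (L.per_eq_zero_iff.not.mpr p.2)] at hp
      exact hp ▸ L.per_mem_lattice p
  · intro hz
    obtain ⟨p, rfl⟩ := L.exists_per_eq hz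
    by_cases hp : p = 0
    · exact .inl (L.per_eq_zero_iff.mpr hp)
    · exact .inr ⟨⟨p, hp⟩, inv_mul_cancel₀ (L.per_eq_zero_iff.not.mpr hp)⟩

lemma sigma_neg (z : ℂ) : L.sigma (-z) = -L.sigma z := by
  have hper (p : ℤ × ℤ) : L.per (-p) = -L.per p := by
    simp only [per, Prod.fst_neg, Prod.snd_neg, neg_smul, neg_add]
  have hreduced : L.reducedSigma (-z) = L.reducedSigma z := by
    simp only [reducedSigma, canonicalProduct]
    rw [← ((Equiv.neg (ℤ × ℤ)).subtypeEquiv (p := (· ≠ 0)) (q := (· ≠ 0)) (by simp)).tprod_eq]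
    simp only [Equiv.subtypeEquiv_apply, Equiv.neg_apply, hper, inv_neg, neg_mul_neg]
  rw [sigma_eq_mul_reducedSigma, sigma_eq_mul_reducedSigma, hreduced, neg_mul]

lemma deriv_sigma_zero : deriv L.sigma 0 = 1 := by
  rw [funext L.sigma_eq_mul_reducedSigma,
    ((hasDerivAt_id' 0).fun_mul (L.differentiable_reducedSigma 0).hasDerivAt).deriv]
  simp [reducedSigma]

lemma deriv_logDeriv_reducedSigma {z : ℂ} (hz : z ∉ L.lattice) :
    deriv (logDeriv L.reducedSigma) z = -L.toPeriodPair.weierstrassPExcept 0 z := by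
  have hne (p : {p : ℤ × ℤ // p ≠ 0}) : L.per p ≠ 0 := L.per_eq_zero_iff.not.mpr p.2
  have hz' (p : {p : ℤ × ℤ // p ≠ 0}) : L.per p ≠ z := fun h => hz (h ▸ L.per_mem_lattice p)
  have hprod := hasSum_deriv_logDeriv_canonicalProduct L.summable_norm_inv_per_pow_three
    (z := z) fun p hp => hz' p (by rwa [inv_mul_eq_one₀ (hne p)] at hp)
  have hP := (L.toPeriodPair.latticeEquivProd.symm.toEquiv.hasSum_iff.mpr
    (L.toPeriodPair.hasSum_weierstrassPExcept 0 z)).neg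
  rw [← hasSum_subtype_iff_of_support_subset (s := {p | p ≠ 0})] at hP
  · refine hprod.unique (hP.congr_fun fun p => ?_)
    have := hne p
    have := sub_ne_zero.mpr (hz' p)
    have := sub_ne_zero.mpr (hz' p).symm
    simp only [Function.comp_apply, LinearEquiv.coe_toEquiv, coe_latticeEquivProd_symm, hne p,
      if_false]
    field_simp
    ring
  · intro p hp
    contrapose! hp
    simp_all

lemma deriv_logDeriv_sigma {z : ℂ} (hz : z ∉ L.lattice) :
    deriv (logDeriv L.sigma) z = -L.toPeriodPair.weierstrassP z := by
  have hlog : logDeriv L.sigma =ᶠ[𝓝 z] fun w => 1 / w + logDeriv L.reducedSigma w := by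
    filter_upwards [L.toPeriodPair.isClosed_lattice.isOpen_compl.mem_nhds hz] with w hw
    have hw' := L.sigma_eq_zero_iff.not.mpr hw
    rw [sigma_eq_mul_reducedSigma, mul_eq_zero, not_or] at hw'
    rw [funext L.sigma_eq_mul_reducedSigma,
      logDeriv_mul (f := fun w => w) w hw'.1 hw'.2 differentiableAt_fun_id
        (L.differentiable_reducedSigma w), logDeriv_id']
  have hz' := L.sigma_eq_zero_iff.not.mpr hz
  rw [sigma_eq_mul_reducedSigma, mul_eq_zero, not_or] at hz'
  have hreduced : DifferentiableAt ℂ (logDeriv L.reducedSigma) z :=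
    (L.differentiable_reducedSigma.deriv z).div (L.differentiable_reducedSigma z) hz'.2
  have hP := L.toPeriodPair.weierstrassPExcept_add 0 z
  simp only [ZeroMemClass.coe_zero, sub_zero, ne_eq, OfNat.ofNat_ne_zero, not_false_eq_true,
    zero_pow, div_zero] at hP
  rw [hlog.deriv_eq, deriv_fun_add (by fun_prop (disch := exact hz'.1)) hreduced,
    L.deriv_logDeriv_reducedSigma hz, ← hP]
  have hinv : deriv (fun w : ℂ => 1 / w) z = -(1 / z ^ 2) := by simp [one_div]
  linear_combination hinv

lemma exists_sigma_add_eq {w : ℂ} (hw : w ∈ L.lattice) :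
    ∃ a c : ℂ, a ≠ 0 ∧ ∀ z, L.sigma (z + w) = a * exp (c * z) * L.sigma z := by
  have hadd {z : ℂ} : z + w ∈ L.lattice ↔ z ∈ L.lattice := add_mem_cancel_right hw
  obtain ⟨a, c, ha, h⟩ := exists_eqOn_mul_exp_mul_of_deriv_logDeriv_eqOn
    L.toPeriodPair.isClosed_lattice.isOpen_compl (isPreconnected_compl_lattice L.toPeriodPair)
    (f := fun z => L.sigma (z + w)) (g := L.sigma)
    (L.differentiable_sigma.comp (by fun_prop)).differentiableOn
    L.differentiable_sigma.differentiableOn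
    (fun z hz => L.sigma_eq_zero_iff.not.mpr (hadd.not.mpr hz))
    (fun z hz => L.sigma_eq_zero_iff.not.mpr hz) fun z hz => by
      have hlog : (logDeriv fun z => L.sigma (z + w)) = fun z => logDeriv L.sigma (z + w) := by
        funext z
        simp only [logDeriv_apply, deriv_comp_add_const]
      rw [hlog, deriv_comp_add_const, L.deriv_logDeriv_sigma (hadd.not.mpr hz),
        L.deriv_logDeriv_sigma hz]
      exact congrArg Neg.neg (L.toPeriodPair.weierstrassP_add_coe z ⟨w, hw⟩)
  refine ⟨a, c, ha, fun z => ?_⟩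
  by_cases hz : z ∈ L.lattice
  · rw [L.sigma_eq_zero_iff.mpr hz, L.sigma_eq_zero_iff.mpr (hadd.mpr hz), mul_zero]
  · exact h hz

lemma deriv_sigma_ne_zero {w : ℂ} (hw : w ∈ L.lattice) : deriv L.sigma w ≠ 0 := by
  obtain ⟨a, c, ha, h⟩ := L.exists_sigma_add_eq hw
  have hexp : DifferentiableAt ℂ (fun z => a * exp (c * z)) 0 := by fun_prop
  have hderiv : deriv (fun z => L.sigma (z + w)) 0 = a := by
    rw [funext h, deriv_fun_mul hexp (L.differentiable_sigma 0),
      L.deriv_sigma_zero, L.sigma_eq_zero_iff.mpr (zero_mem _)]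
    simp
  rw [deriv_comp_add_const, zero_add] at hderiv
  exact hderiv ▸ ha

end EllLattice

section Liouville

variable {f g : ℂ → ℂ}

lemma eq_zero_of_mul_eq_zero_of_differentiable (hf : Differentiable ℂ f)
    (hg : Differentiable ℂ g) (hfg : ∀ z, f z * g z = 0) (hg0 : ∃ z, g z ≠ 0) (z : ℂ) :
    f z = 0 := by
  obtain ⟨w, hw⟩ := hg0
  rcases AnalyticOnNhd.eq_zero_or_eq_zero_of_mul_eq_zero
    (fun z _ => hf.analyticAt z) (fun z _ => hg.analyticAt z) (U := Set.univ)
    (fun z _ => hfg z) isPreconnected_univ with h | h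
  · exact h z (Set.mem_univ z)
  · exact absurd (h w (Set.mem_univ w)) hw

lemma exists_differentiable_eq_mul_of_analyticOrderAt_le (hf : Differentiable ℂ f)
    (hg : Differentiable ℂ g) (hg0 : ∃ z, g z ≠ 0)
    (hord : ∀ z, analyticOrderAt g z ≤ analyticOrderAt f z) :
    ∃ q : ℂ → ℂ, Differentiable ℂ q ∧ ∀ z, f z = q z * g z := by
  have hgtop (z : ℂ) : analyticOrderAt g z ≠ ⊤ := fun htop => by
    obtain ⟨w, hw⟩ := hg0
    exact hw (AnalyticOnNhd.eqOn_zero_of_preconnected_of_eventuallyEq_zero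
      (fun z _ => hg.analyticAt z) isPreconnected_univ (Set.mem_univ z)
      (analyticOrderAt_eq_top.mp htop) (Set.mem_univ w))
  have hmer : MeromorphicOn (f / g) Set.univ := fun z _ =>
    (hf.analyticAt z).meromorphicAt.div (hg.analyticAt z).meromorphicAt
  have hq (z : ℂ) : AnalyticAt ℂ (toMeromorphicNFOn (f / g) Set.univ) z := by
    rw [← (meromorphicNFOn_toMeromorphicNFOn (f / g) Set.univ
        (Set.mem_univ z)).meromorphicOrderAt_nonneg_iff_analyticAt,
      meromorphicOrderAt_toMeromorphicNFOn hmer (Set.mem_univ z),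
      meromorphicOrderAt_div (hf.analyticAt z).meromorphicAt (hg.analyticAt z).meromorphicAt,
      (hf.analyticAt z).meromorphicOrderAt_eq, (hg.analyticAt z).meromorphicOrderAt_eq]
    exact LinearOrderedAddCommGroupWithTop.sub_self_nonneg.trans
      ((LinearOrderedAddCommGroupWithTop.sub_le_sub_iff_left_of_ne_top
        (ENat.map_eq_top_iff.not.mpr (hgtop z))).mpr
        (ENat.monotone_map_iff.mpr Nat.mono_cast (hord z)))
  refine ⟨_, fun z => (hq z).differentiableAt, fun z => ?_⟩
  have hne : ∀ᶠ w in 𝓝[≠] z, g w ≠ 0 :=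
    (hg.analyticAt z).eventually_eq_zero_or_eventually_ne_zero.resolve_left
      (analyticOrderAt_eq_top.not.mp (hgtop z))
  have heq : f =ᶠ[𝓝[≠] z] fun w => toMeromorphicNFOn (f / g) Set.univ w * g w := by
    filter_upwards [hne, hmer.toMeromorphicNFOn_eq_self_on_nhdsNE (Set.mem_univ z)] with w hw hqw
    rw [hqw, Pi.div_apply, div_mul_cancel₀ _ hw]
  exact (((hf z).continuousAt.eventuallyEq_nhds_iff_eventuallyEq_nhdsNE
    ((hq z).continuousAt.mul (hg z).continuousAt)).mp heq).eq_of_nhds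

lemma exists_eq_mul_of_analyticOrderAt_le (P : PeriodPair) (hf : Differentiable ℂ f)
    (hg : Differentiable ℂ g) (hg0 : ∃ z, g z ≠ 0)
    (hord : ∀ z, analyticOrderAt g z ≤ analyticOrderAt f z)
    (hper : ∀ w ∈ P.lattice, ∀ z, f (z + w) * g z = f z * g (z + w)) :
    ∃ k : ℂ, ∀ z, f z = k * g z := by
  obtain ⟨q, hq, hfq⟩ := exists_differentiable_eq_mul_of_analyticOrderAt_le hf hg hg0 hord
  have hqper (z w : ℂ) (hw : w ∈ P.lattice) : q (z + w) = q z := by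
    obtain ⟨z₀, hz₀⟩ := hg0
    refine sub_eq_zero.mp (eq_zero_of_mul_eq_zero_of_differentiable
      (f := fun z => q (z + w) - q z) (g := fun z => g (z + w) * g z) (by fun_prop) (by fun_prop)
      (fun z => ?_) ?_ z)
    · linear_combination hper w hw z - g z * hfq (z + w) + g (z + w) * hfq z
    · by_contra! h
      exact hz₀ (eq_zero_of_mul_eq_zero_of_differentiable (f := g) (g := fun z => g (z + w)) hg
        (by fun_prop) (fun z => (mul_comm _ _).trans (h z)) ⟨z₀ - w, by simpa⟩ z₀)
  have hbounded := (IsZLattice.isCompact_range_of_periodic P.lattice q hq.continuous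
    hqper).isBounded
  exact ⟨q 0, fun z => by rw [hfq, hq.apply_eq_apply_of_bounded hbounded z 0]⟩

end Liouville

namespace EllLattice

variable (L : EllLattice)

/-- `σ(x + a) σ(x - a)`, which equals `σ(x)² σ(a)² (℘(a) - ℘(x))`: as functions of `x`, these are
sections of one line bundle of degree two, whatever the value of `a`. -/
def sigmaAddSub (x a : ℂ) : ℂ := L.sigma (x + a) * L.sigma (x - a)

lemma differentiable_sigmaAddSub (a : ℂ) : Differentiable ℂ fun x => L.sigmaAddSub x a := by
  have := L.differentiable_sigma
  unfold sigmaAddSub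
  fun_prop

lemma sigmaAddSub_eq_zero_iff {x a : ℂ} :
    L.sigmaAddSub x a = 0 ↔ x + a ∈ L.lattice ∨ x - a ∈ L.lattice := by
  rw [sigmaAddSub, mul_eq_zero, sigma_eq_zero_iff, sigma_eq_zero_iff]

lemma sigmaAddSub_swap (x a : ℂ) : L.sigmaAddSub x a = -L.sigmaAddSub a x := by
  rw [sigmaAddSub, sigmaAddSub, add_comm, ← neg_sub a x, sigma_neg, mul_neg]

lemma sigmaAddSub_neg_left (x a : ℂ) : L.sigmaAddSub (-x) a = L.sigmaAddSub x a := by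
  rw [sigmaAddSub, sigmaAddSub, neg_add_eq_sub, ← neg_sub x a, neg_sub_left, sigma_neg, sigma_neg,
    neg_mul_neg, mul_comm, add_comm]

lemma exists_sigmaAddSub_add_eq {w : ℂ} (hw : w ∈ L.lattice) :
    ∃ e : ℂ → ℂ, ∀ x a, L.sigmaAddSub (x + w) a = e x * L.sigmaAddSub x a := by
  obtain ⟨A, c, -, h⟩ := L.exists_sigma_add_eq hw
  refine ⟨fun x => A ^ 2 * exp (2 * c * x), fun x a => ?_⟩
  have hexp : exp (2 * c * x) = exp (c * (x + a)) * exp (c * (x - a)) := by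
    rw [← Complex.exp_add]
    ring_nf
  simp only [sigmaAddSub, add_right_comm x w, add_sub_right_comm, h, hexp]
  ring

lemma analyticOrderAt_sigmaAddSub {a x : ℂ} (ha : 2 * a ∉ L.lattice)
    (hx : L.sigmaAddSub x a = 0) : analyticOrderAt (fun y => L.sigmaAddSub y a) x = 1 := by
  have hσ (b : ℂ) : DifferentiableAt ℂ (fun y => L.sigma (y + b)) x :=
    (L.differentiable_sigma.comp (differentiable_id.add_const b)) x
  have hderiv : deriv (fun y => L.sigmaAddSub y a) x =
      deriv L.sigma (x + a) * L.sigma (x - a) + L.sigma (x + a) * deriv L.sigma (x - a) := by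
    simp only [sigmaAddSub, sub_eq_add_neg]
    rw [deriv_fun_mul (hσ a) (hσ (-a)), deriv_comp_add_const, deriv_comp_add_const]
  have hdiff : x + a ∈ L.lattice → x - a ∉ L.lattice := fun hp hm =>
    ha (by convert sub_mem hp hm using 1; ring)
  have hanalytic := (L.differentiable_sigmaAddSub a).analyticAt x
  refine hanalytic.analyticOrderAt_eq_one_of_zero_deriv_ne_zero hx ?_
  rw [hderiv]
  rcases L.sigmaAddSub_eq_zero_iff.mp hx with h | h
  · rw [L.sigma_eq_zero_iff.mpr h, zero_mul, add_zero]
    exact mul_ne_zero (L.deriv_sigma_ne_zero h) (L.sigma_eq_zero_iff.not.mpr (hdiff h))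
  · rw [L.sigma_eq_zero_iff.mpr h, mul_zero, zero_add]
    exact mul_ne_zero (L.sigma_eq_zero_iff.not.mpr fun h' => hdiff h' h) (L.deriv_sigma_ne_zero h)

lemma exists_eq_mul_sigmaAddSub {f : ℂ → ℂ} (hf : Differentiable ℂ f) {a : ℂ}
    (ha : 2 * a ∉ L.lattice) (hpos : f a = 0) (hneg : f (-a) = 0)
    (hper : ∀ w ∈ L.lattice, ∃ e : ℂ → ℂ, ∀ y, f (y + w) = e y * f y ∧
      L.sigmaAddSub (y + w) a = e y * L.sigmaAddSub y a) :
    ∃ k : ℂ, ∀ y, f y = k * L.sigmaAddSub y a := by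
  have hadd {w : ℂ} (hw : w ∈ L.lattice) {y : ℂ} (hy : f y = 0) : f (y + w) = 0 := by
    obtain ⟨e, he⟩ := hper w hw
    rw [(he y).1, hy, mul_zero]
  have hzero {y : ℂ} (hy : L.sigmaAddSub y a = 0) : f y = 0 := by
    rcases L.sigmaAddSub_eq_zero_iff.mp hy with h | h
    · simpa using hadd h hneg
    · simpa using hadd h hpos
  refine exists_eq_mul_of_analyticOrderAt_le L.toPeriodPair hf (L.differentiable_sigmaAddSub a)
    ?_ (fun y => ?_) fun w hw y => ?_
  · by_contra! h0
    have htop : analyticOrderAt (fun y => L.sigmaAddSub y a) a = ⊤ :=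
      analyticOrderAt_eq_top.mpr (.of_forall h0)
    simp [L.analyticOrderAt_sigmaAddSub ha (h0 a)] at htop
  · by_cases hy : L.sigmaAddSub y a = 0
    · rw [L.analyticOrderAt_sigmaAddSub ha hy, Order.one_le_iff_ne_zero, analyticOrderAt_ne_zero]
      exact ⟨hf.analyticAt y, hzero hy⟩
    · rw [((L.differentiable_sigmaAddSub a).analyticAt y).analyticOrderAt_eq_zero.mpr hy]
      exact zero_le
  · obtain ⟨e, he⟩ := hper w hw
    rw [(he y).1, (he y).2]
    ring

lemma sigmaAddSub_three_term_of_notMem {a b : ℂ} (ha : 2 * a ∉ L.lattice)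
    (hadd : a + b ∉ L.lattice) (hsub : a - b ∉ L.lattice) (x c : ℂ) :
    L.sigmaAddSub x a * L.sigmaAddSub b c + L.sigmaAddSub x b * L.sigmaAddSub c a +
      L.sigmaAddSub x c * L.sigmaAddSub a b = 0 := by
  have hab : L.sigmaAddSub a b ≠ 0 := by
    rw [ne_eq, sigmaAddSub_eq_zero_iff]
    tauto
  have hd := L.differentiable_sigmaAddSub
  obtain ⟨k, hk⟩ := L.exists_eq_mul_sigmaAddSub (a := a)
    (f := fun y => L.sigmaAddSub y b * L.sigmaAddSub c a + L.sigmaAddSub y c * L.sigmaAddSub a b)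
    (by fun_prop) ha (by rw [L.sigmaAddSub_swap c a]; ring)
    (by rw [sigmaAddSub_neg_left, sigmaAddSub_neg_left, L.sigmaAddSub_swap c a]; ring)
    fun w hw => by
      obtain ⟨e, he⟩ := L.exists_sigmaAddSub_add_eq hw
      exact ⟨e, fun y => ⟨by rw [he, he]; ring, he y a⟩⟩
  have hkb : k = -L.sigmaAddSub b c := by
    have hbb : L.sigmaAddSub b b = 0 := L.sigmaAddSub_eq_zero_iff.mpr (.inr (by simp))
    have hfb := hk b
    rw [hbb, L.sigmaAddSub_swap b a] at hfb
    refine mul_right_cancel₀ hab ?_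
    linear_combination hfb
  linear_combination hk x + L.sigmaAddSub x a * hkb

theorem sigmaAddSub_three_term (x a b c : ℂ) :
    L.sigmaAddSub x a * L.sigmaAddSub b c + L.sigmaAddSub x b * L.sigmaAddSub c a +
      L.sigmaAddSub x c * L.sigmaAddSub a b = 0 := by
  have hΛ := countable_lattice L.toPeriodPair
  have hexcept : {a : ℂ | 2 * a ∈ L.lattice ∨ a + b ∈ L.lattice ∨ a - b ∈ L.lattice}.Countable :=
    (hΛ.preimage (mul_right_injective₀ two_ne_zero)).union
      ((hΛ.preimage (add_left_injective b)).union (hΛ.preimage (sub_left_injective (b := b))))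
  have hcont : Continuous fun a => L.sigmaAddSub x a * L.sigmaAddSub b c +
      L.sigmaAddSub x b * L.sigmaAddSub c a + L.sigmaAddSub x c * L.sigmaAddSub a b := by
    have := L.differentiable_sigma.continuous
    unfold sigmaAddSub
    fun_prop
  refine congrFun (hcont.ext_on (hexcept.dense_compl ℝ) continuous_const fun a ha => ?_) a
  simp only [Set.mem_compl_iff, Set.mem_ofPred_eq, not_or] at ha
  exact L.sigmaAddSub_three_term_of_notMem ha.1 ha.2.1 ha.2.2 x c

lemma sigma_ne_zero {z : ℂ} (hz : ¬ L.mem z) : L.sigma z ≠ 0 :=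
  L.sigma_eq_zero_iff.not.mpr (L.mem_iff_mem_lattice.not.mp hz)

lemma Phi_ne_zero {x k : ℂ} (hx : ¬ L.mem x) (hk : ¬ L.mem k) (hxk : ¬ L.mem (x + k)) :
    L.Phi x k ≠ 0 :=
  div_ne_zero (L.sigma_ne_zero hxk) (mul_ne_zero (L.sigma_ne_zero hx) (L.sigma_ne_zero hk))

lemma mem_neg_iff {z : ℂ} : L.mem (-z) ↔ L.mem z := by
  simp only [mem_iff_mem_lattice, neg_mem_iff]

lemma sigma_fay (x y k p : ℂ) :
    L.sigma (x + k + p) * L.sigma (y + p) * L.sigma k * L.sigma (x + y) =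
      L.sigma (x + k) * L.sigma (x + y + p) * L.sigma (k + p) * L.sigma y -
        L.sigma (x + y + k + p) * L.sigma (y - k) * L.sigma x * L.sigma p := by
  have h := L.sigmaAddSub_three_term ((x + y + k + 2 * p) / 2) ((x + k - y) / 2)
    ((x + y - k) / 2) ((x + y + k) / 2)
  have hF {u v a b : ℂ} (hadd : u + v = a) (hsub : u - v = b) :
      L.sigmaAddSub u v = L.sigma a * L.sigma b := by rw [sigmaAddSub, hadd, hsub]
  rw [hF (a := x + k + p) (b := y + p) (by ring) (by ring),
    hF (a := x + y) (b := -k) (by ring) (by ring),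
    hF (a := x + y + p) (b := k + p) (by ring) (by ring),
    hF (a := x + k) (b := y) (by ring) (by ring),
    hF (a := x + y + k + p) (b := p) (by ring) (by ring),
    hF (a := x) (b := -(y - k)) (by ring) (by ring), sigma_neg, sigma_neg] at h
  linear_combination -h

theorem Phi_fay {x y k p : ℂ} (hx : ¬ L.mem x) (hy : ¬ L.mem y) (hk : ¬ L.mem k)
    (hp : ¬ L.mem p) (hkp : ¬ L.mem (k + p)) (hxy : ¬ L.mem (x + y)) :
    L.Phi x (k + p) * L.Phi y p =
      L.Phi x k * L.Phi (x + y) p + L.Phi (x + y) (k + p) * L.Phi y (-k) := by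
  have hfay := L.sigma_fay x y k p
  have := L.sigma_ne_zero hx
  have := L.sigma_ne_zero hy
  have := L.sigma_ne_zero hk
  have := L.sigma_ne_zero hp
  have := L.sigma_ne_zero hkp
  have := L.sigma_ne_zero hxy
  simp only [Phi, sigma_neg, ← add_assoc, ← sub_eq_add_neg]
  field_simp
  linear_combination hfay

lemma exp_mul_Psi (x k : ℂ) : exp (L.zeta x * k) * L.Psi x k = L.Phi x k := by
  rw [Psi, mul_left_comm, ← Complex.exp_add, neg_mul, add_neg_cancel, Complex.exp_zero, mul_one]

lemma exp_neg_mul_Psi_neg (x k : ℂ) : exp (-L.zeta x * k) * L.Psi x (-k) = L.Phi x (-k) := by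
  rw [← exp_mul_Psi, neg_mul, mul_neg]

end EllLattice

namespace KPData

variable {N N' : ℕ} (D : KPData N N')

/-- `ρ_i` without its factor `exp (ζ(ξ) κ_i)`; the exponentials in `Ψ` cancel, leaving powers of
`Φ`. -/
def bareρ (i : Fin N) (n m h : ℤ) : ℂ :=
  D.L.Phi D.del (-D.κ i) ^ n * D.L.Phi D.eps (-D.κ i) ^ m * D.L.Phi D.lam (-D.κ i) ^ h * D.ρ0 i

/-- `ν_j` without its factor `exp (ζ(ξ) κ'_j)`. -/
def bareν (j : Fin N') (n m h : ℤ) : ℂ :=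
  D.L.Phi D.del (D.κ' j) ^ (-n) * D.L.Phi D.eps (D.κ' j) ^ (-m) *
    D.L.Phi D.lam (D.κ' j) ^ (-h) * D.ν0 j

lemma ρ_eq (i : Fin N) (n m h : ℤ) :
    D.ρ i n m h = D.bareρ i n m h * exp (D.L.zeta (D.xi n m h) * D.κ i) := by
  simp only [ρ, bareρ, EllLattice.exp_neg_mul_Psi_neg]
  ring

lemma ν_eq (j : Fin N') (n m h : ℤ) :
    D.ν j n m h = D.bareν j n m h * exp (D.L.zeta (D.xi n m h) * D.κ' j) := by
  simp only [ν, bareν, EllLattice.exp_mul_Psi]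
  ring

lemma r_apply (i : Fin N) (n m h : ℤ) :
    D.r n m h i = D.bareρ i n m h * D.L.Phi (D.xi n m h) (D.κ i) := by
  rw [r, ρ_eq, mul_assoc, EllLattice.exp_mul_Psi]

lemma s_apply (j : Fin N') (n m h : ℤ) :
    D.s n m h j = D.bareν j n m h * D.L.Phi (D.xi n m h) (D.κ' j) := by
  rw [s, ν_eq, mul_assoc, EllLattice.exp_mul_Psi]

lemma M_apply (i : Fin N) (j : Fin N') (n m h : ℤ) :
    D.M n m h i j =
      D.bareρ i n m h * D.bareν j n m h * D.L.Phi (D.xi n m h) (D.κ i + D.κ' j) := by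
  rw [← EllLattice.exp_mul_Psi, mul_add, Complex.exp_add, M, Matrix.of_apply, ρ_eq, ν_eq]
  ring

/-- Admissibility of a lattice parameter `y ∈ {δ, ε, λ}`: with `κ_i, κ'_j ∉ Λ`, the factors
`Φ_y(-κ_i)` and `Φ_y(κ'_j)` of the plane waves are finite and nonzero. -/
structure IsRegularStep (y : ℂ) : Prop where
  step : ¬ D.L.mem y
  step_sub_κ : ∀ i, ¬ D.L.mem (y - D.κ i)
  step_add_κ' : ∀ j, ¬ D.L.mem (y + D.κ' j)

/-- The genericity assumption in its literal form: the arguments of `σ` occurring in the dressed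
Cauchy matrix, in `r` and `s`, and in all their shifts lie outside the lattice. -/
structure IsRegular : Prop where
  xi : ∀ n m h, ¬ D.L.mem (D.xi n m h)
  κ : ∀ i, ¬ D.L.mem (D.κ i)
  κ' : ∀ j, ¬ D.L.mem (D.κ' j)
  κ_add_κ' : ∀ i j, ¬ D.L.mem (D.κ i + D.κ' j)
  del : D.IsRegularStep D.del
  eps : D.IsRegularStep D.eps
  lam : D.IsRegularStep D.lam

variable {D}

lemma IsRegularStep.Phi_neg_κ_ne_zero {y : ℂ} (hy : D.IsRegularStep y) {i : Fin N}
    (hκ : ¬ D.L.mem (D.κ i)) : D.L.Phi y (-D.κ i) ≠ 0 :=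
  D.L.Phi_ne_zero hy.step (D.L.mem_neg_iff.not.mpr hκ) (sub_eq_add_neg y _ ▸ hy.step_sub_κ i)

lemma IsRegularStep.Phi_κ'_ne_zero {y : ℂ} (hy : D.IsRegularStep y) {j : Fin N'}
    (hκ' : ¬ D.L.mem (D.κ' j)) : D.L.Phi y (D.κ' j) ≠ 0 :=
  D.L.Phi_ne_zero hy.step hκ' (hy.step_add_κ' j)

lemma IsRegular.M_eq_sub_vecMulVec (hD : D.IsRegular) {y : ℂ} (hy : ¬ D.L.mem y)
    {n m h n' m' h' : ℤ} (hxi : D.xi n' m' h' = D.xi n m h + y)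
    (hρ : ∀ i, D.bareρ i n' m' h' = D.bareρ i n m h * D.L.Phi y (-D.κ i))
    (hν : ∀ j, D.bareν j n m h = D.bareν j n' m' h' * D.L.Phi y (D.κ' j)) :
    D.M n' m' h' = D.M n m h - vecMulVec (D.r n m h) (D.s n' m' h') := by
  ext i j
  have hfay := D.L.Phi_fay (hD.xi n m h) hy (hD.κ i) (hD.κ' j) (hD.κ_add_κ' i j)
    (hxi ▸ hD.xi n' m' h')
  rw [Matrix.sub_apply, vecMulVec_apply, M_apply, M_apply, r_apply, s_apply, hxi, hρ, hν]
  linear_combination -D.bareρ i n m h * D.bareν j n' m' h' * hfay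

lemma IsRegular.bareρ_succ (hD : D.IsRegular) (i : Fin N) (n m h : ℤ) :
    D.bareρ i (n + 1) m h = D.bareρ i n m h * D.L.Phi D.del (-D.κ i) ∧
      D.bareρ i n (m + 1) h = D.bareρ i n m h * D.L.Phi D.eps (-D.κ i) ∧
      D.bareρ i n m (h + 1) = D.bareρ i n m h * D.L.Phi D.lam (-D.κ i) := by
  simp only [bareρ, zpow_add_one₀ (hD.del.Phi_neg_κ_ne_zero (hD.κ i)),
    zpow_add_one₀ (hD.eps.Phi_neg_κ_ne_zero (hD.κ i)),
    zpow_add_one₀ (hD.lam.Phi_neg_κ_ne_zero (hD.κ i))]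
  refine ⟨?_, ?_, ?_⟩ <;> ring

lemma IsRegular.bareν_eq_succ_mul (hD : D.IsRegular) (j : Fin N') (n m h : ℤ) :
    D.bareν j n m h = D.bareν j (n + 1) m h * D.L.Phi D.del (D.κ' j) ∧
      D.bareν j n m h = D.bareν j n (m + 1) h * D.L.Phi D.eps (D.κ' j) ∧
      D.bareν j n m h = D.bareν j n m (h + 1) * D.L.Phi D.lam (D.κ' j) := by
  have hdel := hD.del.Phi_κ'_ne_zero (hD.κ' j)
  have heps := hD.eps.Phi_κ'_ne_zero (hD.κ' j)
  have hlam := hD.lam.Phi_κ'_ne_zero (hD.κ' j)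
  simp only [bareν, neg_add, ← sub_eq_add_neg, zpow_sub_one₀ hdel, zpow_sub_one₀ heps,
    zpow_sub_one₀ hlam]
  refine ⟨?_, ?_, ?_⟩ <;> field_simp

lemma Generic.isRegular {P : ℕ} {extra : Fin P → ℂ} (hD : D.Generic extra) : D.IsRegular := by
  have hstep (cn cm ch : ℤ) (hc : ¬ (cn = 0 ∧ cm = 0 ∧ ch = 0)) :
      D.IsRegularStep (cn • D.del + cm • D.eps + ch • D.lam) :=
    { step := by simpa using hD 0 cn cm ch 0 0 0 (by tauto)
      step_sub_κ := fun i => by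
        simpa [Pi.single_apply, sub_eq_add_neg] using
          hD 0 cn cm ch (Pi.single i (-1)) 0 0 (by tauto)
      step_add_κ' := fun j => by
        simpa [Pi.single_apply] using hD 0 cn cm ch 0 (Pi.single j 1) 0 (by tauto) }
  exact
    { xi := fun n m h => by simpa [KPData.xi] using hD 1 n m h 0 0 0 (by simp)
      κ := fun i => by simpa [Pi.single_apply] using hD 0 0 0 0 (Pi.single i 1) 0 0 (by simp)
      κ' := fun j => by simpa [Pi.single_apply] using hD 0 0 0 0 0 (Pi.single j 1) 0 (by simp)
      κ_add_κ' := fun i j => by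
        simpa [Pi.single_apply] using hD 0 0 0 0 (Pi.single i 1) (Pi.single j 1) 0 (by simp)
      del := by simpa using hstep 1 0 0 (by simp)
      eps := by simpa using hstep 0 1 0 (by simp)
      lam := by simpa using hstep 0 0 1 (by simp) }

end KPData

theorem dressed_cauchy_matrix_shift_general {N N' : ℕ} (D : KPData N N') (hD : D.IsRegular) :
    ∀ n m h : ℤ,
      D.M (n + 1) m h = D.M n m h - Matrix.vecMulVec (D.r n m h) (D.s (n + 1) m h) ∧
      D.M n (m + 1) h = D.M n m h - Matrix.vecMulVec (D.r n m h) (D.s n (m + 1) h) ∧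
      D.M n m (h + 1) = D.M n m h - Matrix.vecMulVec (D.r n m h) (D.s n m (h + 1)) := by
  intro n m h
  have hρ := fun i => hD.bareρ_succ i n m h
  have hν := fun j => hD.bareν_eq_succ_mul j n m h
  refine ⟨hD.M_eq_sub_vecMulVec hD.del.step ?_ (fun i => (hρ i).1) fun j => (hν j).1,
    hD.M_eq_sub_vecMulVec hD.eps.step ?_ (fun i => (hρ i).2.1) fun j => (hν j).2.1,
    hD.M_eq_sub_vecMulVec hD.lam.step ?_ (fun i => (hρ i).2.2) fun j => (hν j).2.2⟩ <;>
  · simp only [KPData.xi, add_smul, one_smul]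
    ring

/-- The dressed elliptic Cauchy matrix obeys the linear shift relations
`M̃ = M − r s̃ᵀ`, `M̂ = M − r ŝᵀ`, `M̄ = M − r s̄ᵀ`. -/
theorem dressed_cauchy_matrix_shift {N N' : ℕ} (D : KPData N N')
    (hρ0 : ∀ i, D.ρ0 i ≠ 0) (hν0 : ∀ j, D.ν0 j ≠ 0)
    (hgen : D.Generic ![]) :
    ∀ n m h : ℤ,
      D.M (n + 1) m h = D.M n m h - Matrix.vecMulVec (D.r n m h) (D.s (n + 1) m h) ∧
      D.M n (m + 1) h = D.M n m h - Matrix.vecMulVec (D.r n m h) (D.s n (m + 1) h) ∧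
      D.M n m (h + 1) = D.M n m h - Matrix.vecMulVec (D.r n m h) (D.s n m (h + 1)) := by
  exact dressed_cauchy_matrix_shift_general D hgen.isRegular
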